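/- arXiv:1307.4709 — 2 statements merged into one kernel-verified Lean document; each statement's English description precedes it below -/
import Mathlib

section
/- Sharpness of the conforming lower bound: under the hypotheses of the conforming minorant estimate, taking u := e = û − ũ ∈ H¹°₋₁(Ω) yields equality: 2∫_Ω f e dx − ∫_Ω A∇(2ũ + e)·∇e dx = ‖∇e‖²_A; hence the supremum of M₋(∇ũ,u) = 2∫_Ω f u dx − ∫_Ω A∇(2ũ + u)·∇u dx over u ∈ H¹°₋₁(Ω) equals ‖∇(û − ũ)‖²_A and is attained. -/
open MeasureTheory Filter Topology
open scoped RealInnerProductSpace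

noncomputable section

/-- Euclidean space `ℝ^N`. -/
abbrev Euc (N : ℕ) := EuclideanSpace ℝ (Fin N)

/-- The Poincaré constant `c_N = 2/(N-2)`. -/
def cN (N : ℕ) : ℝ := 2 / ((N : ℝ) - 2)

variable {N : ℕ}

/-- Squared weighted `L²_s(Ω)` norm: `∫_Ω (1+|x|²)^s u(x)² dx`. -/
def sqL2 (Ω : Set (Euc N)) (s : ℝ) (u : Euc N → ℝ) : ℝ :=
  ∫ x in Ω, (1 + ‖x‖ ^ 2) ^ s * u x ^ 2

/-- Weighted `L²_s(Ω)` norm. -/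
def nrmL2 (Ω : Set (Euc N)) (s : ℝ) (u : Euc N → ℝ) : ℝ :=
  Real.sqrt (sqL2 Ω s u)

/-- Membership in the weighted space `L²_s(Ω)` (scalar functions). -/
def MemL2 (Ω : Set (Euc N)) (s : ℝ) (u : Euc N → ℝ) : Prop :=
  AEStronglyMeasurable u (volume.restrict Ω) ∧
    Integrable (fun x => (1 + ‖x‖ ^ 2) ^ s * u x ^ 2) (volume.restrict Ω)

/-- Squared weighted `L²_s(Ω;ℝ^N)` norm for vector fields. -/
def sqL2V (Ω : Set (Euc N)) (s : ℝ) (v : Euc N → Euc N) : ℝ :=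
  ∫ x in Ω, (1 + ‖x‖ ^ 2) ^ s * ‖v x‖ ^ 2

/-- Weighted `L²_s(Ω;ℝ^N)` norm for vector fields. -/
def nrmL2V (Ω : Set (Euc N)) (s : ℝ) (v : Euc N → Euc N) : ℝ :=
  Real.sqrt (sqL2V Ω s v)

/-- Membership in the weighted space `L²_s(Ω;ℝ^N)` (vector fields). -/
def MemL2V (Ω : Set (Euc N)) (s : ℝ) (v : Euc N → Euc N) : Prop :=
  AEStronglyMeasurable v (volume.restrict Ω) ∧
    Integrable (fun x => (1 + ‖x‖ ^ 2) ^ s * ‖v x‖ ^ 2) (volume.restrict Ω)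

/-- Test functions: `φ ∈ C_c^∞(Ω)`. -/
def IsTest (Ω : Set (Euc N)) (φ : Euc N → ℝ) : Prop :=
  ContDiff ℝ (⊤ : ℕ∞) φ ∧ HasCompactSupport φ ∧ tsupport φ ⊆ Ω

/-- `g` is the weak gradient of `u` on `Ω`:
`∫_Ω u ∇φ = −∫_Ω φ g` for all test functions `φ`. -/
def IsWeakGrad (Ω : Set (Euc N)) (u : Euc N → ℝ) (g : Euc N → Euc N) : Prop :=
  ∀ φ : Euc N → ℝ, IsTest Ω φ →
    (∫ x in Ω, u x • gradient φ x) = - ∫ x in Ω, φ x • g x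

/-- `d` is the weak divergence of the vector field `v` on `Ω`:
`∫_Ω v·∇φ = −∫_Ω d φ` for all test functions `φ`. -/
def IsWeakDiv (Ω : Set (Euc N)) (v : Euc N → Euc N) (d : Euc N → ℝ) : Prop :=
  ∀ φ : Euc N → ℝ, IsTest Ω φ →
    (∫ x in Ω, ⟪v x, gradient φ x⟫) = - ∫ x in Ω, d x * φ x

/-- `u ∈ H¹°₋₁(Ω)` with weak gradient `g`: `u ∈ L²₋₁(Ω)`, `g ∈ L²(Ω;ℝ^N)` is the weak
gradient of `u`, and `u` is approximated by test functions in the natural norms. -/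
def MemH10 (Ω : Set (Euc N)) (u : Euc N → ℝ) (g : Euc N → Euc N) : Prop :=
  MemL2 Ω (-1) u ∧ MemL2V Ω 0 g ∧ IsWeakGrad Ω u g ∧
    ∃ φ : ℕ → Euc N → ℝ, (∀ n, IsTest Ω (φ n)) ∧
      Tendsto (fun n => nrmL2 Ω (-1) (fun x => u x - φ n x)) atTop (𝓝 0) ∧
      Tendsto (fun n => nrmL2V Ω 0 (fun x => g x - gradient (φ n) x)) atTop (𝓝 0)

/-- `g ∈ 𝒢`, the closure in `L²(Ω;ℝ^N)` of `{∇φ : φ ∈ C_c^∞(Ω)}`. -/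
def MemG (Ω : Set (Euc N)) (g : Euc N → Euc N) : Prop :=
  MemL2V Ω 0 g ∧
    ∃ φ : ℕ → Euc N → ℝ, (∀ n, IsTest Ω (φ n)) ∧
      Tendsto (fun n => nrmL2V Ω 0 (fun x => g x - gradient (φ n) x)) atTop (𝓝 0)

/-- `ψ ∈ D₀`, the set of weakly divergence-free fields in `L²(Ω;ℝ^N)`. -/
def MemD0 (Ω : Set (Euc N)) (ψ : Euc N → Euc N) : Prop :=
  MemL2V Ω 0 ψ ∧
    ∀ φ : Euc N → ℝ, IsTest Ω φ → (∫ x in Ω, ⟪ψ x, gradient φ x⟫) = 0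

/-- The coefficient matrix field `A : Ω → ℝ^{N×N}`: measurable, essentially bounded,
symmetric, and uniformly coercive (`A(x)ξ·ξ ≥ α⁻²|ξ|²` for a.e. `x ∈ Ω`). -/
structure Coeff (N : ℕ) (Ω : Set (Euc N)) where
  A : Euc N → Euc N →L[ℝ] Euc N
  α : ℝ
  α_pos : 0 < α
  meas : ∀ ξ : Euc N, AEStronglyMeasurable (fun x => A x ξ) (volume.restrict Ω)
  bdd : ∃ C : ℝ, ∀ᵐ x ∂(volume.restrict Ω), ∀ ξ : Euc N, ‖A x ξ‖ ≤ C * ‖ξ‖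
  symm : ∀ x : Euc N, ∀ ξ η : Euc N, ⟪A x ξ, η⟫ = ⟪ξ, A x η⟫
  coer : ∀ᵐ x ∂(volume.restrict Ω), ∀ ξ : Euc N, α⁻¹ ^ 2 * ‖ξ‖ ^ 2 ≤ ⟪A x ξ, ξ⟫

/-- The weighted inner product `⟨v,w⟩_A = ∫_Ω A v · w dx`. -/
def ipA (Ω : Set (Euc N)) (A : Euc N → Euc N →L[ℝ] Euc N) (v w : Euc N → Euc N) : ℝ :=
  ∫ x in Ω, ⟪A x (v x), w x⟫

/-- The squared `A`-weighted norm `‖v‖²_A = ∫_Ω A v · v dx`. -/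
def sqA (Ω : Set (Euc N)) (A : Euc N → Euc N →L[ℝ] Euc N) (v : Euc N → Euc N) : ℝ :=
  ipA Ω A v v

/-- The `A`-weighted norm `‖v‖_A`. -/
def nrmA (Ω : Set (Euc N)) (A : Euc N → Euc N →L[ℝ] Euc N) (v : Euc N → Euc N) : ℝ :=
  Real.sqrt (sqA Ω A v)

/-- `w = A⁻¹ v` (a.e. on `Ω`), with `w ∈ L²(Ω;ℝ^N)`. -/
def IsAInv (Ω : Set (Euc N)) (A : Euc N → Euc N →L[ℝ] Euc N) (v w : Euc N → Euc N) : Prop :=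
  MemL2V Ω 0 w ∧ ∀ᵐ x ∂(volume.restrict Ω), A x (w x) = v x

theorem aux_cs {X E : Type*} [MeasurableSpace X] {μ : Measure X} [NormedAddCommGroup E]
    [InnerProductSpace ℝ E] {F G : X → E} (hF : MemLp F 2 μ) (hG : MemLp G 2 μ) :
    Integrable (fun x => (⟪F x, G x⟫ : ℝ)) μ ∧
      |∫ x, (⟪F x, G x⟫ : ℝ) ∂μ| ≤ √(∫ x, ‖F x‖ ^ 2 ∂μ) * √(∫ x, ‖G x‖ ^ 2 ∂μ) := by
  have hint : Integrable (fun x => ‖F x‖ * ‖G x‖) μ := hF.norm.integrable_mul hG.norm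
  have h1 : Integrable (fun x => (⟪F x, G x⟫ : ℝ)) μ :=
    hint.mono' (hF.1.inner hG.1) (Eventually.of_forall fun x => norm_inner_le_norm _ _)
  refine ⟨h1, ?_⟩
  have h2 : |∫ x, (⟪F x, G x⟫ : ℝ) ∂μ| ≤ ∫ x, ‖F x‖ * ‖G x‖ ∂μ := by
    rw [← Real.norm_eq_abs]
    exact norm_integral_le_of_norm_le hint
      (Eventually.of_forall fun x => norm_inner_le_norm _ _)
  have h3 := integral_mul_norm_le_Lp_mul_Lq (μ := μ) (f := F) (g := G) (p := 2) (q := 2)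
    Real.HolderConjugate.two_two (by simpa using hF) (by simpa using hG)
  rw [← Real.sqrt_eq_rpow, ← Real.sqrt_eq_rpow] at h3
  simp only [Real.rpow_two] at h3
  exact h2.trans h3

theorem aux_memV {Ω : Set (Euc N)} {v : Euc N → Euc N} (h : MemL2V Ω 0 v) :
    MemLp v 2 (volume.restrict Ω) := by
  rw [memLp_two_iff_integrable_sq_norm h.1]
  simpa using h.2

theorem aux_weight (s : ℝ) : Continuous (fun x : Euc N => (1 + ‖x‖ ^ 2) ^ s) := by
  refine Continuous.rpow_const (by fun_prop) fun x => Or.inl ?_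
  positivity

theorem aux_wsq (s t : ℝ) (x : Euc N) :
    ‖(1 + ‖x‖ ^ 2) ^ (s / 2) * t‖ ^ 2 = (1 + ‖x‖ ^ 2) ^ s * t ^ 2 := by
  have h : (0 : ℝ) ≤ 1 + ‖x‖ ^ 2 := by positivity
  rw [Real.norm_eq_abs, sq_abs, mul_pow, ← Real.rpow_natCast ((1 + ‖x‖ ^ 2) ^ (s / 2)),
    ← Real.rpow_mul h]
  norm_num

theorem aux_mem {Ω : Set (Euc N)} {s : ℝ} {u : Euc N → ℝ} (h : MemL2 Ω s u) :
    MemLp (fun x => (1 + ‖x‖ ^ 2) ^ (s / 2) * u x) 2 (volume.restrict Ω) := by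
  have hm : AEStronglyMeasurable (fun x => (1 + ‖x‖ ^ 2) ^ (s / 2) * u x)
      (volume.restrict Ω) := (aux_weight _).aestronglyMeasurable.mul h.1
  rw [memLp_two_iff_integrable_sq_norm hm]
  simp only [aux_wsq]
  exact h.2

theorem aux_test {Ω : Set (Euc N)} (s : ℝ) {φ : Euc N → ℝ} (h : IsTest Ω φ) :
    MemLp (fun x => (1 + ‖x‖ ^ 2) ^ (s / 2) * φ x) 2 (volume.restrict Ω) :=
  Continuous.memLp_of_hasCompactSupport ((aux_weight _).mul h.1.continuous)
    (h.2.1.mul_left)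

theorem aux_testgrad {Ω : Set (Euc N)} {φ : Euc N → ℝ} (h : IsTest Ω φ) :
    MemLp (gradient φ) 2 (volume.restrict Ω) := by
  refine Continuous.memLp_of_hasCompactSupport ?_ ?_
  · exact (LinearIsometryEquiv.continuous _).comp (h.1.continuous_fderiv (by simp))
  · exact (h.2.1.fderiv (𝕜 := ℝ)).comp_left (g := (InnerProductSpace.toDual ℝ (Euc N)).symm)
      (map_zero _)

theorem aux_A {Ω : Set (Euc N)} (M : Coeff N Ω) {v : Euc N → Euc N}
    (h : MemLp v 2 (volume.restrict Ω)) :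
    MemLp (fun x => M.A x (v x)) 2 (volume.restrict Ω) := by
  obtain ⟨C, hC⟩ := M.bdd
  refine MemLp.of_le_mul (c := C) h ?_ (hC.mono fun x hx => hx (v x))
  have : (fun x => M.A x (v x)) =
      fun x => ∑ i, v x i • M.A x (EuclideanSpace.basisFun (Fin N) ℝ i) := by
    funext x
    conv_lhs => rw [← (EuclideanSpace.basisFun (Fin N) ℝ).sum_repr (v x)]
    simp [map_sum]
  rw [this]
  refine Finset.aestronglyMeasurable_fun_sum _ fun i _ => ?_
  have hi : AEStronglyMeasurable (fun x => v x i) (volume.restrict Ω) :=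
    (EuclideanSpace.proj (𝕜 := ℝ) i).continuous.comp_aestronglyMeasurable h.1
  exact hi.smul (M.meas _)

theorem aux_wmul (a b : ℝ) (x : Euc N) :
    (⟪(1 + ‖x‖ ^ 2) ^ ((1 : ℝ) / 2) * a, (1 + ‖x‖ ^ 2) ^ ((-1 : ℝ) / 2) * b⟫ : ℝ) = a * b := by
  have h : (0 : ℝ) < 1 + ‖x‖ ^ 2 := by positivity
  have h2 : (1 + ‖x‖ ^ 2) ^ ((1 : ℝ) / 2) * (1 + ‖x‖ ^ 2) ^ ((-1 : ℝ) / 2) = 1 := by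
    rw [← Real.rpow_add h]; norm_num
  simp only [RCLike.inner_apply, conj_trivial]
  linear_combination a * b * h2

theorem aux_key {Ω : Set (Euc N)} (M : Coeff N Ω) {f : Euc N → ℝ} (hf : MemL2 Ω 1 f)
    {gu : Euc N → Euc N} (hgu : MemL2V Ω 0 gu)
    (hweak : ∀ φ : Euc N → ℝ, IsTest Ω φ →
      (∫ x in Ω, ⟪M.A x (gu x), gradient φ x⟫) = ∫ x in Ω, f x * φ x)
    {u : Euc N → ℝ} {g : Euc N → Euc N} (h : MemH10 Ω u g) :
    (∫ x in Ω, ⟪M.A x (gu x), g x⟫) = ∫ x in Ω, f x * u x := by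
  obtain ⟨hu, hg, -, φ, hφ, hlim1, hlim2⟩ := h
  have hA := aux_A M (aux_memV hgu)
  have hg' := aux_memV hg
  have hf' := aux_mem hf
  have hu' := aux_mem hu
  have I1 := (aux_cs hA hg').1
  have I2 := (aux_cs hf' hu').1
  simp only [aux_wmul] at I2
  have bound : ∀ n, |(∫ x in Ω, ⟪M.A x (gu x), g x⟫) - ∫ x in Ω, f x * u x| ≤
      √(∫ x in Ω, ‖M.A x (gu x)‖ ^ 2) * nrmL2V Ω 0 (fun x => g x - gradient (φ n) x) +
      √(∫ x in Ω, ‖(1 + ‖x‖ ^ 2) ^ ((1 : ℝ) / 2) * f x‖ ^ 2) *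
        nrmL2 Ω (-1) (fun x => u x - φ n x) := by
    intro n
    have hp := aux_test (-1) (hφ n)
    have hpg := aux_testgrad (hφ n)
    have J1 := (aux_cs hA hpg).1
    have J2 := (aux_cs hf' hp).1
    simp only [aux_wmul] at J2
    have K1 := (aux_cs hA (hg'.sub hpg)).2
    have K2 := (aux_cs hf' (hu'.sub hp)).2
    simp only [Pi.sub_apply, ← mul_sub, aux_wmul, aux_wsq (-1)] at K2
    simp only [mul_sub] at K2
    simp only [Pi.sub_apply, inner_sub_right] at K1
    rw [integral_sub I1 J1] at K1
    rw [integral_sub I2 J2] at K2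
    have e1 : nrmL2V Ω 0 (fun x => g x - gradient (φ n) x) =
        √(∫ x in Ω, ‖g x - gradient (φ n) x‖ ^ 2) := by
      simp [nrmL2V, sqL2V]
    rw [e1]
    refine le_trans ?_ (add_le_add K1 K2)
    rw [hweak _ (hφ n)]
    refine le_trans (le_of_eq ?_) (abs_sub _ _)
    congr 1
    ring
  have hl := (hlim2.const_mul (√(∫ x in Ω, ‖M.A x (gu x)‖ ^ 2))).add
    (hlim1.const_mul (√(∫ x in Ω, ‖(1 + ‖x‖ ^ 2) ^ ((1 : ℝ) / 2) * f x‖ ^ 2)))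
  have h0 := ge_of_tendsto' hl bound
  simp only [mul_zero, add_zero] at h0
  exact sub_eq_zero.1 (abs_nonpos_iff.1 h0)

theorem aux_id {Ω : Set (Euc N)} (M : Coeff N Ω) {gu gt g : Euc N → Euc N}
    (hgu : MemL2V Ω 0 gu) (hgt : MemL2V Ω 0 gt) (hg : MemL2V Ω 0 g) :
    2 * (∫ x in Ω, ⟪M.A x (gu x), g x⟫) - (∫ x in Ω, ⟪M.A x ((2 : ℝ) • gt x + g x), g x⟫) =
      sqA Ω M.A (fun x => gu x - gt x) - sqA Ω M.A (fun x => (gu x - gt x) - g x) := by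
  have a := aux_memV hgu
  have b := aux_memV hgt
  have c := aux_memV hg
  have d := a.sub b
  have I1 := (aux_cs (aux_A M a) c).1
  have I2 := (aux_cs (aux_A M ((b.const_smul (2 : ℝ)).add c)) c).1
  have I3 := (aux_cs (aux_A M d) d).1
  have I4 := (aux_cs (aux_A M (d.sub c)) (d.sub c)).1
  simp only [Pi.sub_apply, Pi.add_apply, Pi.smul_apply] at I1 I2 I3 I4
  unfold sqA ipA
  rw [← integral_const_mul, ← integral_sub (I1.const_mul 2) I2, ← integral_sub I3 I4]
  congr 1
  funext x
  have s1 := M.symm x (g x) (gu x)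
  have s2 := M.symm x (g x) (gt x)
  rw [real_inner_comm] at s1 s2
  have s3 := real_inner_comm (g x) (M.A x (gu x))
  have s4 := real_inner_comm (g x) (M.A x (gt x))
  have s5 := real_inner_comm (gu x) (M.A x (g x))
  have s6 := real_inner_comm (gt x) (M.A x (g x))
  simp only [map_sub, map_add, map_smul, inner_sub_left, inner_sub_right, inner_add_left,
    real_inner_smul_left]
  linarith

theorem aux_nonneg {Ω : Set (Euc N)} (M : Coeff N Ω) (v : Euc N → Euc N) :
    0 ≤ sqA Ω M.A v := by
  refine integral_nonneg_of_ae (M.coer.mono fun x hx => le_trans ?_ (hx (v x)))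
  simp only [Pi.zero_apply]
  positivity

/-- Sharpness of the conforming lower bound: `u = e` gives equality, and the supremum of the
minorant equals `‖∇(û − ũ)‖²_A` and is attained. -/
theorem stmt_7 (Ω : Set (Euc N)) (hΩ : IsOpen Ω) (hN : 3 ≤ N) (M : Coeff N Ω)
    (f : Euc N → ℝ) (hf : MemL2 Ω 1 f)
    (uh : Euc N → ℝ) (gu : Euc N → Euc N)
    (huh : MemL2 Ω (-1) uh) (hgu : MemL2V Ω 0 gu) (hguw : IsWeakGrad Ω uh gu)
    (hweak : ∀ φ : Euc N → ℝ, IsTest Ω φ →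
      (∫ x in Ω, ⟪M.A x (gu x), gradient φ x⟫) = ∫ x in Ω, f x * φ x)
    (ut : Euc N → ℝ) (gt : Euc N → Euc N)
    (hut : MemL2 Ω (-1) ut) (hgt : MemL2V Ω 0 gt) (hgtw : IsWeakGrad Ω ut gt)
    (he : MemH10 Ω (fun x => uh x - ut x) (fun x => gu x - gt x)) :
    2 * (∫ x in Ω, f x * (uh x - ut x)) -
        (∫ x in Ω, ⟪M.A x ((2 : ℝ) • gt x + (gu x - gt x)), gu x - gt x⟫) =
      sqA Ω M.A (fun x => gu x - gt x) ∧
    IsGreatest {r : ℝ | ∃ (u : Euc N → ℝ) (g : Euc N → Euc N), MemH10 Ω u g ∧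
        r = 2 * (∫ x in Ω, f x * u x) -
          ∫ x in Ω, ⟪M.A x ((2 : ℝ) • gt x + g x), g x⟫}
      (sqA Ω M.A (fun x => gu x - gt x)) := by
  have key : ∀ u g, MemH10 Ω u g → 2 * (∫ x in Ω, f x * u x) -
      (∫ x in Ω, ⟪M.A x ((2 : ℝ) • gt x + g x), g x⟫) =
      sqA Ω M.A (fun x => gu x - gt x) - sqA Ω M.A (fun x => (gu x - gt x) - g x) := by
    intro u g h
    rw [← aux_key M hf hgu hweak h]
    exact aux_id M hgu hgt h.2.1
  have h1 := key _ _ he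
  have h0 : sqA Ω M.A (fun x => (gu x - gt x) - (gu x - gt x)) = 0 := by
    simp [sqA, ipA]
  rw [h0, sub_zero] at h1
  refine ⟨h1, ⟨_, _, he, h1.symm⟩, ?_⟩
  rintro r ⟨u, g, h, rfl⟩
  rw [key u g h]
  exact sub_le_self _ (aux_nonneg M _)
end
end

section
/- Non-conforming majorant for the gradient part: let ṽ ∈ L²(Ω;ℝ^N), set E := ∇û − A^{−1}ṽ, and let E = g + A^{−1}ψ with g ∈ 𝒢, ψ ∈ D₀ be its Helmholtz decomposition. Then for every v ∈ L²(Ω;ℝ^N) possessing a weak divergence div v ∈ L²₊₁(Ω), ‖g‖_A ≤ M₊(A^{−1}ṽ,v) := c_{N,α}‖f + div v‖_{L²₊₁(Ω)} + ‖A^{−1}(ṽ − v)‖_A. -/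
open MeasureTheory Filter Topology
open scoped RealInnerProductSpace

noncomputable section

variable {N : ℕ}

lemma test_cont {Ω : Set (Euc N)} {φ : Euc N → ℝ} (h : IsTest Ω φ) : Continuous φ := h.1.continuous

lemma grad_cont {Ω : Set (Euc N)} {φ : Euc N → ℝ} (h : IsTest Ω φ) : Continuous (gradient φ) := by
  have h1 : Continuous (fderiv ℝ φ) := h.1.continuous_fderiv (by simp)
  exact (InnerProductSpace.toDual ℝ (Euc N)).symm.continuous.comp h1

lemma grad_supp {Ω : Set (Euc N)} {φ : Euc N → ℝ} (h : IsTest Ω φ) :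
    HasCompactSupport (gradient φ) := by
  have h1 : HasCompactSupport (fderiv ℝ φ) := h.2.1.fderiv ℝ
  exact h1.comp_left (g := (InnerProductSpace.toDual ℝ (Euc N)).symm) (by simp)

lemma grad_zero {Ω : Set (Euc N)} {φ : Euc N → ℝ} (h : IsTest Ω φ) (x : Euc N) (hx : x ∉ Ω) :
    gradient φ x = 0 := by
  have h1 : fderiv ℝ φ x = 0 := by
    by_contra h2
    exact hx (h.2.2 (support_fderiv_subset ℝ h2))
  simp [gradient, h1]

lemma test_zero {Ω : Set (Euc N)} {φ : Euc N → ℝ} (h : IsTest Ω φ) (x : Euc N) (hx : x ∉ Ω) :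
    φ x = 0 := by
  by_contra h2
  exact hx (h.2.2 (subset_tsupport _ h2))

lemma fderiv_grad {φ : Euc N → ℝ} (x v : Euc N) :
    fderiv ℝ φ x v = ⟪gradient φ x, v⟫ := by
  simp [gradient]

lemma one_add_pos (x : Euc N) : 0 < 1 + ‖x‖ ^ 2 := by positivity

lemma hardy_deriv {Ω : Set (Euc N)} {φ : Euc N → ℝ} (h : IsTest Ω φ) (i : Fin N) (x : Euc N) :
    fderiv ℝ (fun x : Euc N => φ x ^ 2 * (x i * (1 + ‖x‖ ^ 2)⁻¹)) x (EuclideanSpace.single i 1)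
      = 2 * φ x * (gradient φ x i) * x i * (1 + ‖x‖ ^ 2)⁻¹
        + φ x ^ 2 * ((1 + ‖x‖ ^ 2)⁻¹ - 2 * x i ^ 2 * ((1 + ‖x‖ ^ 2)⁻¹) ^ 2) := by
  have hφ : HasFDerivAt φ (fderiv ℝ φ x) x :=
    ((h.1.differentiable (by simp)) x).hasFDerivAt
  have hi : HasFDerivAt (fun x : Euc N => x i) (EuclideanSpace.proj i : Euc N →L[ℝ] ℝ) x :=
    (EuclideanSpace.proj i : Euc N →L[ℝ] ℝ).hasFDerivAt
  have hn : HasFDerivAt (fun x : Euc N => 1 + ‖x‖ ^ 2) (2 • innerSL ℝ x) x :=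
    ((hasStrictFDerivAt_norm_sq x).hasFDerivAt).const_add 1
  have hinv := (hasDerivAt_inv (one_add_pos x).ne').comp_hasFDerivAt x hn
  have key := (hφ.pow 2).mul (hi.mul hinv)
  have this : fderiv ℝ (fun x : Euc N => φ x ^ 2 * (x i * (1 + ‖x‖ ^ 2)⁻¹)) x = _ := key.fderiv
  rw [this]
  have h3 : fderiv ℝ φ x (EuclideanSpace.single i 1) = gradient φ x i := by
    rw [fderiv_grad, EuclideanSpace.inner_single_right]; simp
  simp [h3, EuclideanSpace.inner_single_right]
  ring

lemma hardy_whole {Ω : Set (Euc N)} (hN : 3 ≤ N) {φ : Euc N → ℝ} (h : IsTest Ω φ) :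
    ∫ x, (1 + ‖x‖ ^ 2)⁻¹ * φ x ^ 2 ≤ cN N ^ 2 * ∫ x, ‖gradient φ x‖ ^ 2 := by
  have hc := test_cont h
  have hgc := grad_cont h
  have hs := h.2.1
  have hgs := grad_supp h
  have hic : Continuous (fun x : Euc N => (1 + ‖x‖ ^ 2)⁻¹) :=
    (by fun_prop : Continuous (fun x : Euc N => 1 + ‖x‖ ^ 2)).inv₀ (fun x => (one_add_pos x).ne')
  let D : Fin N → Euc N → ℝ := fun i x => 2 * φ x * (gradient φ x i) * x i * (1 + ‖x‖ ^ 2)⁻¹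
        + φ x ^ 2 * ((1 + ‖x‖ ^ 2)⁻¹ - 2 * x i ^ 2 * ((1 + ‖x‖ ^ 2)⁻¹) ^ 2)
  have mkI : ∀ F : Euc N → ℝ, Continuous F → (∀ x, φ x = 0 → F x = 0) → Integrable F := by
    intro F hF h0
    apply hF.integrable_of_hasCompactSupport
    apply hs.mono'
    intro x hx
    apply subset_tsupport
    intro h1
    exact hx (h0 x h1)
  have hDI : ∀ i, Integrable (D i) := by
    intro i
    apply mkI
    · simp only [D]
      fun_prop
    · intro x hx; simp [D, hx]
  have hDz : ∀ i, ∫ x, D i x = 0 := by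
    intro i
    have hG : Continuous (fun x : Euc N => φ x ^ 2 * (x i * (1 + ‖x‖ ^ 2)⁻¹)) := by fun_prop
    have := integral_mul_fderiv_eq_neg_fderiv_mul_of_integrable (μ := (volume : Measure (Euc N)))
      (f := fun _ => (1:ℝ)) (g := fun x : Euc N => φ x ^ 2 * (x i * (1 + ‖x‖ ^ 2)⁻¹))
      (v := EuclideanSpace.single i 1) (by simp)
      (by simp only [hardy_deriv h, one_mul]; exact hDI i)
      (by simp only [one_mul]; exact mkI _ hG (fun x hx => by simp [hx]))
      (by intro x _; fun_prop)
      (by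
        intro x _
        have h1 : DifferentiableAt ℝ φ x := h.1.differentiable (by simp) x
        have h2 : DifferentiableAt ℝ (fun x : Euc N => ‖x‖ ^ 2) x :=
          (hasStrictFDerivAt_norm_sq x).hasFDerivAt.differentiableAt
        have h3 : DifferentiableAt ℝ (fun x : Euc N => (1 + ‖x‖ ^ 2)⁻¹) x :=
          (h2.const_add 1).inv (one_add_pos x).ne'
        fun_prop)
    simp only [hardy_deriv h, one_mul] at this
    simpa [D] using this
  set k : ℝ := (N : ℝ) - 2 with hk
  have hkpos : 0 < k := by
    have : (3:ℝ) ≤ N := by exact_mod_cast hN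
    rw [hk]; linarith
  have I1 : Integrable (fun x : Euc N => (1 + ‖x‖ ^ 2)⁻¹ * φ x ^ 2) :=
    mkI _ (by fun_prop) (fun x hx => by simp [hx])
  have I2 : Integrable (fun x : Euc N => ‖gradient φ x‖ ^ 2) := by
    apply Continuous.integrable_of_hasCompactSupport (by fun_prop)
    exact hgs.comp_left (g := fun y => ‖y‖ ^ 2) (by simp)
  have pt : ∀ x : Euc N, k ^ 2 / 4 * ((1 + ‖x‖ ^ 2)⁻¹ * φ x ^ 2) ≤
      ‖gradient φ x‖ ^ 2 + k / 2 * ∑ i, D i x := by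
    intro x
    have hs1 : ∑ i, D i x = 2 * φ x * ⟪x, gradient φ x⟫ * (1 + ‖x‖ ^ 2)⁻¹ +
        φ x ^ 2 * (N * (1 + ‖x‖ ^ 2)⁻¹ - 2 * ‖x‖ ^ 2 * ((1 + ‖x‖ ^ 2)⁻¹) ^ 2) := by
      simp only [D, Finset.sum_add_distrib, ← Finset.mul_sum, Finset.sum_sub_distrib,
        ← Finset.sum_mul]
      rw [EuclideanSpace.norm_sq_eq]
      simp only [PiLp.inner_apply, Finset.sum_const, Finset.card_univ, Fintype.card_fin,
        Real.norm_eq_abs, sq_abs, nsmul_eq_mul, RCLike.inner_apply, conj_trivial]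
      congr 1
      congr 1
      rw [Finset.mul_sum]
      exact Finset.sum_congr rfl fun i _ => by ring
    rw [hs1]
    set q := (1 + ‖x‖ ^ 2)⁻¹ with hq
    have hq0 : 0 < q := inv_pos.2 (one_add_pos x)
    have hq1 : ‖x‖ ^ 2 * q = 1 - q := by
      have : (1 + ‖x‖ ^ 2) * q = 1 := mul_inv_cancel₀ (one_add_pos x).ne'
      linarith
    have hsq : 0 ≤ ‖gradient φ x + (k / 2 * φ x * q) • x‖ ^ 2 := by positivity
    rw [norm_add_sq_real, norm_smul, inner_smul_right, real_inner_comm, mul_pow,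
      Real.norm_eq_abs, sq_abs] at hsq
    have e1 : (k / 2 * φ x * q) ^ 2 * ‖x‖ ^ 2 = k ^ 2 / 4 * φ x ^ 2 * (q * (1 - q)) := by
      rw [← hq1]; ring
    have e2 : 2 * ‖x‖ ^ 2 * q ^ 2 = 2 * q * (1 - q) := by rw [← hq1]; ring
    rw [e1] at hsq
    rw [e2]
    have hNk : (N : ℝ) = k + 2 := by rw [hk]; ring
    rw [hNk]
    have hp : 0 ≤ (k + k ^ 2 / 4) * (q ^ 2 * φ x ^ 2) := by positivity
    nlinarith
  have hint : ∫ x, k ^ 2 / 4 * ((1 + ‖x‖ ^ 2)⁻¹ * φ x ^ 2) ≤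
      ∫ x, (‖gradient φ x‖ ^ 2 + k / 2 * ∑ i, D i x) := by
    apply integral_mono (I1.const_mul _) _ pt
    exact I2.add ((integrable_finsetSum _ fun i _ => hDI i).const_mul _)
  rw [integral_const_mul, integral_add I2 ((integrable_finsetSum _ fun i _ => hDI i).const_mul _),
    integral_const_mul, integral_finsetSum _ (fun i _ => hDI i)] at hint
  simp only [hDz, Finset.sum_const_zero, mul_zero, add_zero] at hint
  have : cN N ^ 2 = (k ^ 2 / 4)⁻¹ := by
    rw [cN, ← hk]; field_simp; norm_num
  rw [this]
  rw [← div_eq_inv_mul, le_div_iff₀ (by positivity)]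
  linarith

lemma hardy {Ω : Set (Euc N)} (hN : 3 ≤ N) {φ : Euc N → ℝ} (h : IsTest Ω φ) :
    sqL2 Ω (-1) φ ≤ cN N ^ 2 * sqL2V Ω 0 (gradient φ) := by
  have h1 := hardy_whole hN h
  rw [sqL2, sqL2V, setIntegral_eq_integral_of_forall_compl_eq_zero,
    setIntegral_eq_integral_of_forall_compl_eq_zero]
  · simpa [Real.rpow_neg_one] using h1
  · intro x hx; simp [grad_zero h x hx]
  · intro x hx; simp [test_zero h x hx]

lemma cs_quad {P Q R : ℝ} (hP : 0 ≤ P) (hR : 0 ≤ R)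
    (h : ∀ t : ℝ, 0 ≤ P + 2 * t * Q + t ^ 2 * R) : |Q| ≤ Real.sqrt P * Real.sqrt R := by
  have := discrim_le_zero (a := R) (b := 2 * Q) (c := P) (fun x => by have := h x; linarith)
  rw [discrim] at this
  rw [← Real.sqrt_mul hP]
  apply Real.abs_le_sqrt
  linarith

lemma memL2V_iff {Ω : Set (Euc N)} {v : Euc N → Euc N} :
    MemL2V Ω 0 v ↔ MemLp v 2 (volume.restrict Ω) := by
  constructor
  · rintro ⟨h1, h2⟩
    rw [memLp_two_iff_integrable_sq_norm h1]
    simpa using h2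
  · intro h
    refine ⟨h.1, ?_⟩
    have := (memLp_two_iff_integrable_sq_norm h.1).1 h
    simpa using this

lemma memL2V_sub {Ω : Set (Euc N)} {v w : Euc N → Euc N} (hv : MemL2V Ω 0 v)
    (hw : MemL2V Ω 0 w) : MemL2V Ω 0 (fun x => v x - w x) :=
  memL2V_iff.2 ((memL2V_iff.1 hv).sub (memL2V_iff.1 hw))

lemma int_sq {Ω : Set (Euc N)} {v : Euc N → Euc N} (hv : MemL2V Ω 0 v) :
    Integrable (fun x => ‖v x‖ ^ 2) (volume.restrict Ω) := by simpa using hv.2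

lemma A_meas {Ω : Set (Euc N)} (M : Coeff N Ω) {u : Euc N → Euc N} (hu : MemL2V Ω 0 u) :
    AEStronglyMeasurable (fun x => M.A x (u x)) (volume.restrict Ω) := by
  have e : (fun x => M.A x (u x)) =
      fun x => ∑ i, (u x i) • M.A x (EuclideanSpace.single i (1:ℝ)) := by
    ext1 x
    conv_lhs => rw [← (EuclideanSpace.basisFun (Fin N) ℝ).sum_repr (u x)]
    simp
  rw [e]
  refine Finset.aestronglyMeasurable_fun_sum _ fun i _ => ?_
  refine AEStronglyMeasurable.smul (𝕜 := ℝ) (f := fun x => u x i) ?_ (M.meas _)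
  exact (EuclideanSpace.proj i : Euc N →L[ℝ] ℝ).continuous.comp_aestronglyMeasurable hu.1

lemma A_int {Ω : Set (Euc N)} (M : Coeff N Ω) {u w : Euc N → Euc N} (hu : MemL2V Ω 0 u)
    (hw : MemL2V Ω 0 w) :
    Integrable (fun x => ⟪M.A x (u x), w x⟫) (volume.restrict Ω) := by
  obtain ⟨C, hC⟩ := M.bdd
  refine Integrable.mono' (((int_sq hu).add (int_sq hw)).const_mul |C|)
    ((A_meas M hu).inner hw.1) ?_
  filter_upwards [hC] with x hx
  have h1 := norm_inner_le_norm (𝕜 := ℝ) (M.A x (u x)) (w x)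
  have h2 := hx (u x)
  have h3 : ‖M.A x (u x)‖ ≤ |C| * ‖u x‖ :=
    h2.trans (mul_le_mul_of_nonneg_right (le_abs_self C) (norm_nonneg _))
  have h4 : ‖u x‖ * ‖w x‖ ≤ ‖u x‖ ^ 2 + ‖w x‖ ^ 2 := by
    nlinarith [sq_nonneg (‖u x‖ - ‖w x‖), sq_nonneg (‖u x‖), sq_nonneg (‖w x‖)]
  calc _ ≤ ‖M.A x (u x)‖ * ‖w x‖ := h1
    _ ≤ |C| * ‖u x‖ * ‖w x‖ := mul_le_mul_of_nonneg_right h3 (norm_nonneg _)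
    _ = |C| * (‖u x‖ * ‖w x‖) := by ring
    _ ≤ _ := mul_le_mul_of_nonneg_left h4 (abs_nonneg _)

lemma sqA_nonneg {Ω : Set (Euc N)} (M : Coeff N Ω) (u : Euc N → Euc N) : 0 ≤ sqA Ω M.A u := by
  apply integral_nonneg_of_ae
  filter_upwards [M.coer] with x hx
  exact le_trans (by positivity) (hx (u x))

lemma ipA_cs {Ω : Set (Euc N)} (M : Coeff N Ω) {u w : Euc N → Euc N} (hu : MemL2V Ω 0 u)
    (hw : MemL2V Ω 0 w) : |ipA Ω M.A u w| ≤ nrmA Ω M.A u * nrmA Ω M.A w := by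
  apply cs_quad (sqA_nonneg M u) (sqA_nonneg M w)
  intro t
  have i1 := A_int M hu hu
  have i2 := (A_int M hu hw).const_mul (2 * t)
  have i3 := (A_int M hw hw).const_mul (t ^ 2)
  have i12 : Integrable (fun x => ⟪M.A x (u x), u x⟫ + 2 * t * ⟪M.A x (u x), w x⟫)
    (volume.restrict Ω) := i1.add i2
  simp only [sqA, ipA]
  rw [← integral_const_mul, ← integral_const_mul, ← integral_add i1 i2,
    ← integral_add i12 i3]
  apply integral_nonneg_of_ae
  filter_upwards [M.coer] with x hx
  have h := le_trans (by positivity) (hx (u x + t • w x))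
  have hs : ⟪M.A x (w x), u x⟫ = ⟪M.A x (u x), w x⟫ := by
    rw [M.symm, real_inner_comm]
  simp only [map_add, map_smul, inner_add_left, inner_add_right, real_inner_smul_left,
    real_inner_smul_right, hs] at h
  simp only [Pi.zero_apply, Pi.add_apply]
  linarith

lemma ipA_sub_right {Ω : Set (Euc N)} (M : Coeff N Ω) {u v w : Euc N → Euc N} (hu : MemL2V Ω 0 u)
    (hv : MemL2V Ω 0 v) (hw : MemL2V Ω 0 w) :
    ipA Ω M.A u (fun x => v x - w x) = ipA Ω M.A u v - ipA Ω M.A u w := by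
  simp only [ipA, inner_sub_right]
  exact integral_sub (A_int M hu hv) (A_int M hu hw)

lemma ipA_symm {Ω : Set (Euc N)} (M : Coeff N Ω) (u v : Euc N → Euc N) :
    ipA Ω M.A u v = ipA Ω M.A v u := by
  simp only [ipA]
  congr 1; ext x
  rw [M.symm, real_inner_comm]

lemma nrmA_tri {Ω : Set (Euc N)} (M : Coeff N Ω) {u w : Euc N → Euc N} (hu : MemL2V Ω 0 u)
    (hw : MemL2V Ω 0 w) :
    nrmA Ω M.A w ≤ nrmA Ω M.A u + nrmA Ω M.A (fun x => u x - w x) := by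
  have he := memL2V_sub hu hw
  have h1 := ipA_cs M hw hu
  have h2 := ipA_cs M hw he
  have h3 := ipA_sub_right M hw hu hw
  have hn : 0 ≤ nrmA Ω M.A w := Real.sqrt_nonneg _
  have hu0 : 0 ≤ nrmA Ω M.A u := Real.sqrt_nonneg _
  have he0 : 0 ≤ nrmA Ω M.A (fun x => u x - w x) := Real.sqrt_nonneg _
  have hsq : nrmA Ω M.A w ^ 2 = ipA Ω M.A w w := Real.sq_sqrt (sqA_nonneg M w)
  rcases hn.eq_or_lt with h | h
  · rw [← h]; positivity
  · have := abs_le.1 h1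
    have := abs_le.1 h2
    nlinarith

lemma sqL2V_le {Ω : Set (Euc N)} (M : Coeff N Ω) {u : Euc N → Euc N} (hu : MemL2V Ω 0 u) :
    sqL2V Ω 0 u ≤ M.α ^ 2 * sqA Ω M.A u := by
  have hα := M.α_pos
  simp only [sqL2V, sqA, ipA]
  rw [← integral_const_mul]
  apply integral_mono_ae hu.2 ((A_int M hu hu).const_mul _)
  filter_upwards [M.coer] with x hx
  have := mul_le_mul_of_nonneg_left (hx (u x)) (sq_nonneg M.α)
  rw [← mul_assoc, ← mul_pow, mul_inv_cancel₀ hα.ne'] at this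
  simpa using this

lemma nrmA_le {Ω : Set (Euc N)} (M : Coeff N Ω) : ∃ C : ℝ, ∀ u : Euc N → Euc N, MemL2V Ω 0 u →
    nrmA Ω M.A u ≤ C * nrmL2V Ω 0 u := by
  obtain ⟨C, hC⟩ := M.bdd
  refine ⟨Real.sqrt |C|, fun u hu => ?_⟩
  rw [nrmA, nrmL2V, ← Real.sqrt_mul (abs_nonneg C)]
  apply Real.sqrt_le_sqrt
  simp only [sqL2V, sqA, ipA]
  rw [← integral_const_mul]
  apply integral_mono_ae (A_int M hu hu) (hu.2.const_mul _)
  filter_upwards [hC] with x hx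
  have h1 := real_inner_le_norm (M.A x (u x)) (u x)
  have h3 : ‖M.A x (u x)‖ ≤ |C| * ‖u x‖ :=
    (hx (u x)).trans (mul_le_mul_of_nonneg_right (le_abs_self C) (norm_nonneg _))
  have h4 := mul_le_mul_of_nonneg_right h3 (norm_nonneg (u x))
  simp only [Real.rpow_zero, one_mul]
  calc _ ≤ _ := h1
    _ ≤ _ := h4
    _ = _ := by ring

lemma test_memL2 {Ω : Set (Euc N)} {φ : Euc N → ℝ} (h : IsTest Ω φ) : MemL2 Ω (-1) φ := by
  have hc := test_cont h
  refine ⟨hc.aestronglyMeasurable, ?_⟩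
  have hic : Continuous (fun x : Euc N => (1 + ‖x‖ ^ 2)⁻¹) :=
    (by fun_prop : Continuous (fun x : Euc N => 1 + ‖x‖ ^ 2)).inv₀ (fun x => (one_add_pos x).ne')
  simp only [Real.rpow_neg_one]
  apply Integrable.restrict
  apply Continuous.integrable_of_hasCompactSupport (by fun_prop)
  apply h.2.1.mono'
  intro x hx
  apply subset_tsupport
  intro h1
  exact hx (by simp [h1])

lemma grad_memL2 {Ω : Set (Euc N)} {φ : Euc N → ℝ} (h : IsTest Ω φ) :
    MemL2V Ω 0 (gradient φ) :=
  memL2V_iff.2 (((grad_cont h).memLp_of_hasCompactSupport (grad_supp h)).restrict _)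

lemma wt_ineq (x : Euc N) (a b : ℝ) :
    0 ≤ (1 + ‖x‖ ^ 2) ^ (1:ℝ) * a ^ 2 + 2 * (a * b) + (1 + ‖x‖ ^ 2) ^ (-1:ℝ) * b ^ 2 := by
  rw [Real.rpow_one, Real.rpow_neg_one]
  have h := one_add_pos x
  have e : (1 + ‖x‖ ^ 2) * a ^ 2 + 2 * (a * b) + (1 + ‖x‖ ^ 2)⁻¹ * b ^ 2 =
    (1 + ‖x‖ ^ 2)⁻¹ * ((1 + ‖x‖ ^ 2) * a + b) ^ 2 := by field_simp; ring
  rw [e]; positivity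

lemma prod_int {Ω : Set (Euc N)} {f φ : Euc N → ℝ} (hf : MemL2 Ω 1 f) (hφ : MemL2 Ω (-1) φ) :
    Integrable (fun x => f x * φ x) (volume.restrict Ω) := by
  refine Integrable.mono' (hf.2.add hφ.2) (hf.1.mul hφ.1) ?_
  refine Eventually.of_forall fun x => ?_
  have h1 := wt_ineq x (f x) (φ x)
  have h2 := wt_ineq x (f x) (-φ x)
  have p1 : 0 ≤ (1 + ‖x‖ ^ 2) ^ (1:ℝ) * f x ^ 2 := by positivity
  have p2 : 0 ≤ (1 + ‖x‖ ^ 2) ^ (-1:ℝ) * φ x ^ 2 := by positivity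
  rw [neg_sq] at h2
  simp only [Pi.add_apply]
  rw [Real.norm_eq_abs, abs_le]
  constructor <;> linarith

lemma sqL2_nonneg (Ω : Set (Euc N)) (s : ℝ) (f : Euc N → ℝ) : 0 ≤ sqL2 Ω s f :=
  integral_nonneg fun x => by positivity

lemma wt_cs {Ω : Set (Euc N)} {f φ : Euc N → ℝ} (hf : MemL2 Ω 1 f) (hφ : MemL2 Ω (-1) φ) :
    |∫ x in Ω, f x * φ x| ≤ nrmL2 Ω 1 f * nrmL2 Ω (-1) φ := by
  apply cs_quad (sqL2_nonneg _ _ _) (sqL2_nonneg _ _ _)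
  intro t
  have i2 := (prod_int hf hφ).const_mul (2 * t)
  have i3 := hφ.2.const_mul (t ^ 2)
  have i12 : Integrable (fun x => (1 + ‖x‖ ^ 2) ^ (1:ℝ) * f x ^ 2 + 2 * t * (f x * φ x))
    (volume.restrict Ω) := hf.2.add i2
  simp only [sqL2]
  rw [← integral_const_mul, ← integral_const_mul, ← integral_add hf.2 i2,
    ← integral_add i12 i3]
  refine integral_nonneg fun x => ?_
  have := wt_ineq x (f x) (t * φ x)
  simp only [Pi.zero_apply, Pi.add_apply]
  linarith

lemma memL2_add {Ω : Set (Euc N)} {f d : Euc N → ℝ} (hf : MemL2 Ω 1 f) (hd : MemL2 Ω 1 d) :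
    MemL2 Ω 1 (fun x => f x + d x) := by
  refine ⟨hf.1.add hd.1, ?_⟩
  have hm : AEStronglyMeasurable (fun x : Euc N => (1 + ‖x‖ ^ 2) ^ (1:ℝ)) (volume.restrict Ω) := by
    simp only [Real.rpow_one]
    exact (by fun_prop : Continuous (fun x : Euc N => 1 + ‖x‖ ^ 2)).aestronglyMeasurable
  refine Integrable.mono' ((hf.2.add hd.2).const_mul 2) (hm.mul ((hf.1.add hd.1).pow 2)) ?_
  refine Eventually.of_forall fun x => ?_
  have p : 0 ≤ (1 + ‖x‖ ^ 2) ^ (1:ℝ) := by positivity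
  rw [Real.norm_of_nonneg (by positivity)]
  simp only [Pi.add_apply]
  have : (f x + d x) ^ 2 ≤ 2 * (f x ^ 2 + d x ^ 2) := by nlinarith [sq_nonneg (f x - d x)]
  have := mul_le_mul_of_nonneg_left this p
  linarith

/-- Non-conforming majorant for the gradient part of the Helmholtz decomposition of
`E = ∇û − A⁻¹ṽ`. -/
theorem stmt_10 (Ω : Set (Euc N)) (hΩ : IsOpen Ω) (hN : 3 ≤ N) (M : Coeff N Ω)
    (f : Euc N → ℝ) (hf : MemL2 Ω 1 f)
    (uh : Euc N → ℝ) (gu : Euc N → Euc N)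
    (huh : MemL2 Ω (-1) uh) (hgu : MemL2V Ω 0 gu) (hguw : IsWeakGrad Ω uh gu)
    (hweak : ∀ φ : Euc N → ℝ, IsTest Ω φ →
      (∫ x in Ω, ⟪M.A x (gu x), gradient φ x⟫) = ∫ x in Ω, f x * φ x)
    (vt : Euc N → Euc N) (hvt : MemL2V Ω 0 vt)
    (wt : Euc N → Euc N) (hwt : IsAInv Ω M.A vt wt)
    (g ψ : Euc N → Euc N) (hg : MemG Ω g) (hψ : MemD0 Ω ψ)
    (hdec : ∀ᵐ x ∂(volume.restrict Ω), M.A x ((gu x - wt x) - g x) = ψ x) :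
    ∀ (v : Euc N → Euc N) (dv : Euc N → ℝ) (w : Euc N → Euc N),
      MemL2V Ω 0 v → MemL2 Ω 1 dv → IsWeakDiv Ω v dv → IsAInv Ω M.A v w →
      nrmA Ω M.A g ≤
        M.α * cN N * nrmL2 Ω 1 (fun x => f x + dv x) +
          nrmA Ω M.A (fun x => wt x - w x) := by
  intro v dv w hv hdv hdiv hw
  set K := M.α * cN N * nrmL2 Ω 1 (fun x => f x + dv x) + nrmA Ω M.A (fun x => wt x - w x) with hK
  have hα := M.α_pos
  have hcN : 0 < cN N := by
    have : (3:ℝ) ≤ N := by exact_mod_cast hN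
    rw [cN]; apply div_pos <;> linarith
  have hK0 : 0 ≤ K := by
    have h1 : 0 ≤ nrmL2 Ω 1 (fun x => f x + dv x) := Real.sqrt_nonneg _
    have h2 : 0 ≤ nrmA Ω M.A (fun x => wt x - w x) := Real.sqrt_nonneg _
    positivity
  have hww := memL2V_sub hwt.1 hw.1
  have hbound : ∀ φ, IsTest Ω φ → ipA Ω M.A g (gradient φ) ≤ K * nrmA Ω M.A (gradient φ) := by
    intro φ hφ
    have hG := grad_memL2 hφ
    have hT := test_memL2 hφ
    have e1 : ipA Ω M.A g (gradient φ) = (∫ x in Ω, (f x + dv x) * φ x)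
        - ipA Ω M.A (fun x => wt x - w x) (gradient φ) := by
      have a1 := A_int M hgu hG
      have a2 := A_int M hwt.1 hG
      have a3 := A_int M hw.1 hG
      have a4 := A_int M hg.1 hG
      have b1 : ∫ x in Ω, ⟪ψ x, gradient φ x⟫ = (∫ x in Ω, ⟪M.A x (gu x), gradient φ x⟫)
          - ipA Ω M.A wt (gradient φ) - ipA Ω M.A g (gradient φ) := by
        have a12 : Integrable (fun x => ⟪M.A x (gu x), gradient φ x⟫ -
          ⟪M.A x (wt x), gradient φ x⟫) (volume.restrict Ω) := a1.sub a2
        simp only [ipA]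
        rw [← integral_sub a1 a2, ← integral_sub a12 a4]
        apply integral_congr_ae
        filter_upwards [hdec] with x hx
        rw [← hx]
        simp [inner_sub_left]
      have b2 : ipA Ω M.A (fun x => wt x - w x) (gradient φ) =
          ipA Ω M.A wt (gradient φ) - ipA Ω M.A w (gradient φ) := by
        simp only [ipA]
        rw [← integral_sub a2 a3]
        simp [inner_sub_left]
      have b3 : ipA Ω M.A w (gradient φ) = ∫ x in Ω, ⟪v x, gradient φ x⟫ := by
        simp only [ipA]
        apply integral_congr_ae
        filter_upwards [hw.2] with x hx
        rw [hx]
      have b4 : (∫ x in Ω, (f x + dv x) * φ x) = (∫ x in Ω, f x * φ x) + ∫ x in Ω, dv x * φ x := by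
        rw [← integral_add (prod_int hf hT) (prod_int hdv hT)]
        simp only [add_mul]
      rw [hψ.2 φ hφ, hweak φ hφ] at b1
      rw [hdiv φ hφ] at b3
      linarith
    have c1 := (abs_le.1 (wt_cs (memL2_add hf hdv) hT)).2
    have c2 := (abs_le.1 (ipA_cs M hww hG)).1
    have c3 : nrmL2 Ω (-1) φ ≤ M.α * cN N * nrmA Ω M.A (gradient φ) := by
      rw [nrmL2, nrmA]
      apply Real.sqrt_le_iff.2
      refine ⟨by positivity, ?_⟩
      rw [mul_pow, Real.sq_sqrt (sqA_nonneg M _)]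
      have d1 := hardy hN hφ
      have d2 := mul_le_mul_of_nonneg_left (sqL2V_le M hG) (sq_nonneg (cN N))
      linarith
    have c0 : 0 ≤ nrmL2 Ω 1 (fun x => f x + dv x) := Real.sqrt_nonneg _
    have c4 := mul_le_mul_of_nonneg_left c3 c0
    rw [e1, hK]
    linarith
  obtain ⟨hgm, φ, hφ, hlim⟩ := hg
  obtain ⟨C, hC⟩ := nrmA_le M
  set n := nrmA Ω M.A g with hn
  have hn0 : 0 ≤ n := Real.sqrt_nonneg _
  have hle : ∀ k, n ^ 2 ≤ K * n + (n + K) * (C * nrmL2V Ω 0 (fun x => g x - gradient (φ k) x)) := by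
    intro k
    have hG := grad_memL2 (hφ k)
    have he := memL2V_sub hgm hG
    have h1 := (abs_le.1 (ipA_cs M hgm he)).2
    rw [ipA_sub_right M hgm hgm hG] at h1
    have h2 := hbound _ (hφ k)
    have h3 := mul_le_mul_of_nonneg_left (nrmA_tri M hgm hG) hK0
    have h4 := mul_le_mul_of_nonneg_left (hC _ he) (add_nonneg hn0 hK0)
    have hsq : n ^ 2 = ipA Ω M.A g g := Real.sq_sqrt (sqA_nonneg M g)
    rw [← hn] at h1 h3
    linarith
  have hfin : n ^ 2 ≤ K * n + (n + K) * (C * 0) :=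
    ge_of_tendsto' (((hlim.const_mul C).const_mul (n + K)).const_add (K * n)) hle
  rcases hn0.eq_or_lt with h | h
  · rw [← h]; exact hK0
  · nlinarith
end
end
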